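/- Let λ > 0. For every x, t ∈ ℝ and every continuous function f : ℝ → ℝ with f ≥ 0, one has (τ_x^{λ+1} f)(t) + (τ_{−x}^{λ+1} f)(t) ≤ ((2λ+1)/(2λ)) · [ (τ_x^{λ} f)(t) + (τ_{−x}^{λ} f)(t) ]. -/

import Mathlib

/-!
Since `c_{λ+1} = ((2λ+1)/(2λ)) c_λ` (`cMu_add_one`), the constants cancel and only the integrals
have to be compared. Reflecting `θ ↦ -θ` in the integral for `-x` leaves `B(θ)` unchanged, so
`τ_x^μ f(t) + τ_{-x}^μ f(t)` is `c_μ` times the integral of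
`2 f_e(B) + 2 f_o(B) (t + xθ)/B = f(B) (1 + r) + f(-B) (1 - r)`, with `r = (t + xθ)/B`,
against `(1 - θ²)^{μ-1}` (`tau1_add_tau1_neg`). As `B² = (t + xθ)² + x²(1 - θ²)`, one has
`|r| ≤ 1`, so this function is nonnegative when `f` is (`kern_add_kern_neg_nonneg`). The
inequality follows from `(1 - θ²)^λ ≤ (1 - θ²)^{λ-1}` on `[-1, 1]`.

Integrability has to be checked for each translation separately, and there `(x + t)/B` may be
unbounded; the factor `1 + θ` compensates, because
`2B² - (x + t)²(1 + θ) = (1 - θ)(x - t)²` (`abs_kern_le`).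
-/

open MeasureTheory intervalIntegral

noncomputable section

/-- Even part of `f`. -/
def evenPart (f : ℝ → ℝ) (s : ℝ) : ℝ := (f s + f (-s)) / 2

/-- Odd part of `f`. -/
def oddPart (f : ℝ → ℝ) (s : ℝ) : ℝ := (f s - f (-s)) / 2

/-- `B(θ) = √(x² + t² + 2xtθ)`. -/
def Bq (x t θ : ℝ) : ℝ := Real.sqrt (x ^ 2 + t ^ 2 + 2 * x * t * θ)

/-- Normalizing constant `c_μ = Γ(μ+1/2)/(Γ(μ)Γ(1/2))`. -/
def cMu (μ : ℝ) : ℝ := Real.Gamma (μ + 1 / 2) / (Real.Gamma μ * Real.Gamma (1 / 2))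

/-- The one-dimensional generalized (Dunkl) translation with parameter `μ`:
`(τ_x^μ f)(t) = c_μ ∫_{−1}^{1} [f_e(B(θ)) + f_o(B(θ))(x+t)/B(θ)] (1+θ)(1−θ²)^{μ−1} dθ`,
where the odd term is interpreted as `0` when `B(θ) = 0`. -/
def tau1 (μ : ℝ) (f : ℝ → ℝ) (x t : ℝ) : ℝ :=
  cMu μ * ∫ θ in (-1 : ℝ)..1,
    (evenPart f (Bq x t θ) +
        (if Bq x t θ = 0 then 0 else oddPart f (Bq x t θ) * (x + t) / Bq x t θ)) *
      ((1 + θ) * (1 - θ ^ 2) ^ (μ - 1))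


/-- The integrand of `tau1` without the factor `(1 - θ²)^(μ-1)`. -/
def kern (f : ℝ → ℝ) (x t θ : ℝ) : ℝ :=
  (evenPart f (Bq x t θ) +
    (if Bq x t θ = 0 then 0 else oddPart f (Bq x t θ) * (x + t) / Bq x t θ)) * (1 + θ)

lemma tau1_eq (μ : ℝ) (f : ℝ → ℝ) (x t : ℝ) :
    tau1 μ f x t = cMu μ * ∫ θ in (-1 : ℝ)..1, kern f x t θ * (1 - θ ^ 2) ^ (μ - 1) := by
  simp only [tau1, kern, mul_assoc]

lemma cMu_add_one (μ : ℝ) (hμ : 0 < μ) :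
    cMu (μ + 1) = (2 * μ + 1) / (2 * μ) * cMu μ := by
  unfold cMu
  rw [show μ + 1 + 1 / 2 = (μ + 1 / 2) + 1 by ring, Real.Gamma_add_one (by positivity),
    Real.Gamma_add_one hμ.ne']
  have := (Real.Gamma_pos_of_pos hμ).ne'
  have := (Real.Gamma_pos_of_pos (show (0 : ℝ) < 1 / 2 by norm_num)).ne'
  field_simp

lemma Bq_radicand_nonneg (x t : ℝ) {θ : ℝ} (hθ : θ ∈ Set.Icc (-1 : ℝ) 1) :
    0 ≤ x ^ 2 + t ^ 2 + 2 * x * t * θ := by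
  have h0 : 0 ≤ 1 - θ ^ 2 := by nlinarith [hθ.1, hθ.2]
  nlinarith [sq_nonneg (t + x * θ), mul_nonneg (sq_nonneg x) h0]

lemma Bq_sq (x t : ℝ) {θ : ℝ} (hθ : θ ∈ Set.Icc (-1 : ℝ) 1) :
    Bq x t θ ^ 2 = x ^ 2 + t ^ 2 + 2 * x * t * θ :=
  Real.sq_sqrt (Bq_radicand_nonneg x t hθ)

lemma Bq_nonneg (x t θ : ℝ) : 0 ≤ Bq x t θ := Real.sqrt_nonneg _

lemma Bq_neg_neg (x t θ : ℝ) : Bq (-x) t (-θ) = Bq x t θ := by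
  unfold Bq
  congr 1
  ring

lemma Bq_le (x t : ℝ) {θ : ℝ} (hθ : θ ∈ Set.Icc (-1 : ℝ) 1) : Bq x t θ ≤ |x| + |t| := by
  refine abs_le_of_sq_le_sq' ?_ (by positivity) |>.2
  rw [Bq_sq x t hθ]
  have h1 : x * t * θ ≤ |x| * |t| := by
    calc x * t * θ ≤ |x * t * θ| := le_abs_self _
      _ = |x| * |t| * |θ| := by rw [abs_mul, abs_mul]
      _ ≤ |x| * |t| * 1 := by gcongr; exact abs_le.2 hθ
      _ = |x| * |t| := mul_one _
  nlinarith [sq_abs x, sq_abs t]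

lemma measurable_kern (f : ℝ → ℝ) (hf : Continuous f) (x t : ℝ) : Measurable (kern f x t) := by
  have hB : Measurable (Bq x t) := by
    unfold Bq
    fun_prop
  have hfm := hf.measurable
  unfold kern evenPart oddPart
  refine Measurable.mul (Measurable.add (by fun_prop) ?_) (by fun_prop)
  exact Measurable.ite (hB (measurableSet_singleton 0)) measurable_const (by fun_prop)

/-- The singularity of `(x + t)/B(θ)` is cancelled by the factor `1 + θ`. -/
lemma abs_kern_le (f : ℝ → ℝ) (hf : Continuous f) (x t : ℝ) :
    ∃ C, ∀ θ ∈ Set.Icc (-1 : ℝ) 1, |kern f x t θ| ≤ C := by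
  obtain ⟨M, hM⟩ := (isCompact_Icc (a := -(|x| + |t|)) (b := |x| + |t|)).exists_bound_of_continuousOn
    hf.continuousOn
  refine ⟨4 * M, fun θ hθ => ?_⟩
  have hB0 := Bq_nonneg x t θ
  have hBle := Bq_le x t hθ
  have hBsq := Bq_sq x t hθ
  unfold kern
  generalize Bq x t θ = b at *
  have h1 := hM b ⟨by linarith [abs_nonneg x, abs_nonneg t], hBle⟩
  have h2 := hM (-b) ⟨by linarith, by linarith⟩
  rw [Real.norm_eq_abs, abs_le] at h1 h2
  have hθ0 : 0 ≤ 1 + θ := by linarith [hθ.1]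
  have he : |evenPart f b * (1 + θ)| ≤ 2 * M := by
    rw [abs_mul, abs_of_nonneg hθ0, mul_comm 2 M]
    refine mul_le_mul ?_ (by linarith [hθ.2]) hθ0 (by linarith)
    unfold evenPart
    exact abs_le.2 ⟨by linarith, by linarith⟩
  have ho : |(if b = 0 then 0 else oddPart f b * (x + t) / b) * (1 + θ)| ≤ 2 * M := by
    split_ifs with hb
    · simp only [zero_mul, abs_zero]
      linarith
    · have hbpos : 0 < b := lt_of_le_of_ne hB0 (Ne.symm hb)
      have hr : |(x + t) * (1 + θ) / b| ≤ 2 := by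
        rw [abs_div, abs_of_pos hbpos, div_le_iff₀ hbpos]
        refine abs_le_of_sq_le_sq ?_ (by positivity)
        -- `2b² - (x+t)²(1+θ) = (1-θ)(x-t)²`, and `1 + θ ≤ 2`
        have k1 : 0 ≤ (1 - θ) * (x - t) ^ 2 := mul_nonneg (by linarith [hθ.2]) (sq_nonneg _)
        have k2 : (x + t) ^ 2 * (1 + θ) ≤ 2 * b ^ 2 := by rw [hBsq]; nlinarith
        calc ((x + t) * (1 + θ)) ^ 2 = ((x + t) ^ 2 * (1 + θ)) * (1 + θ) := by ring
          _ ≤ (2 * b ^ 2) * 2 :=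
            mul_le_mul k2 (by linarith [hθ.2]) hθ0 (by positivity)
          _ = (2 * b) ^ 2 := by ring
      rw [show oddPart f b * (x + t) / b * (1 + θ) = oddPart f b * ((x + t) * (1 + θ) / b) by
        ring, abs_mul, mul_comm 2 M]
      refine mul_le_mul ?_ hr (abs_nonneg _) (by linarith)
      unfold oddPart
      exact abs_le.2 ⟨by linarith, by linarith⟩
  rw [add_mul]
  exact (abs_add_le _ _).trans (by linarith)

lemma intervalIntegrable_weight (μ : ℝ) (hμ : 0 < μ) :
    IntervalIntegrable (fun θ : ℝ => (1 - θ ^ 2) ^ (μ - 1)) volume (-1) 1 := by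
  have right : IntervalIntegrable (fun θ : ℝ => (1 - θ ^ 2) ^ (μ - 1)) volume 0 1 := by
    have h := (intervalIntegrable_rpow' (a := 1) (b := 0) (r := μ - 1)
      (by linarith)).comp_sub_left 1
    simp only [sub_self, sub_zero] at h
    have h2 := h.mul_continuousOn (g := fun θ : ℝ => (1 + θ) ^ (μ - 1)) (by
      refine ContinuousOn.rpow_const (by fun_prop) fun θ hθ => Or.inl ?_
      rw [Set.uIcc_of_le zero_le_one] at hθ
      linarith [hθ.1])
    refine h2.congr fun θ hθ => ?_
    rw [Set.uIoc_of_le zero_le_one] at hθ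
    rw [← Real.mul_rpow (by linarith [hθ.2]) (by linarith [hθ.1])]
    congr 1
    ring
  have left := (IntervalIntegrable.iff_comp_neg enorm_ne_top).1 right
  simp only [neg_zero, neg_sq] at left
  exact left.symm.trans right

lemma intervalIntegrable_kern_mul (μ : ℝ) (hμ : 0 < μ) (f : ℝ → ℝ) (hf : Continuous f)
    (x t : ℝ) :
    IntervalIntegrable (fun θ => kern f x t θ * (1 - θ ^ 2) ^ (μ - 1)) volume (-1) 1 := by
  obtain ⟨C, hC⟩ := abs_kern_le f hf x t
  have hw := intervalIntegrable_weight μ hμ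
  refine (hw.const_mul C).mono_fun' ?_ ?_
  · exact ((measurable_kern f hf x t).mul (by fun_prop)).aestronglyMeasurable
  · refine (ae_restrict_iff' measurableSet_uIoc).2 (Filter.Eventually.of_forall fun θ hθ => ?_)
    rw [Set.uIoc_of_le (by norm_num)] at hθ
    have hw0 : 0 ≤ (1 - θ ^ 2) ^ (μ - 1) :=
      Real.rpow_nonneg (by nlinarith [hθ.1, hθ.2]) _
    simp only
    rw [Real.norm_eq_abs, abs_mul, abs_of_nonneg hw0]
    exact mul_le_mul_of_nonneg_right (hC θ ⟨hθ.1.le, hθ.2⟩) hw0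

lemma intervalIntegrable_kern_neg_mul (μ : ℝ) (hμ : 0 < μ) (f : ℝ → ℝ) (hf : Continuous f)
    (x t : ℝ) :
    IntervalIntegrable (fun θ => kern f (-x) t (-θ) * (1 - θ ^ 2) ^ (μ - 1)) volume (-1) 1 := by
  have h := (IntervalIntegrable.iff_comp_neg enorm_ne_top).1 (intervalIntegrable_kern_mul μ hμ f hf (-x) t)
  simp only [neg_neg, neg_sq] at h
  exact h.symm

lemma intervalIntegrable_sym_mul (μ : ℝ) (hμ : 0 < μ) (f : ℝ → ℝ) (hf : Continuous f)
    (x t : ℝ) :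
    IntervalIntegrable
      (fun θ => (kern f x t θ + kern f (-x) t (-θ)) * (1 - θ ^ 2) ^ (μ - 1)) volume (-1) 1 := by
  simp only [add_mul]
  exact (intervalIntegrable_kern_mul μ hμ f hf x t).add
    (intervalIntegrable_kern_neg_mul μ hμ f hf x t)

lemma tau1_add_tau1_neg (μ : ℝ) (hμ : 0 < μ) (f : ℝ → ℝ) (hf : Continuous f) (x t : ℝ) :
    tau1 μ f x t + tau1 μ f (-x) t = cMu μ * ∫ θ in (-1 : ℝ)..1,
      (kern f x t θ + kern f (-x) t (-θ)) * (1 - θ ^ 2) ^ (μ - 1) := by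
  have hneg : ∫ θ in (-1 : ℝ)..1, kern f (-x) t θ * (1 - θ ^ 2) ^ (μ - 1) =
      ∫ θ in (-1 : ℝ)..1, kern f (-x) t (-θ) * (1 - θ ^ 2) ^ (μ - 1) := by
    have h := intervalIntegral.integral_comp_neg (a := -1) (b := 1)
      (fun θ : ℝ => kern f (-x) t θ * (1 - θ ^ 2) ^ (μ - 1))
    simp only [neg_neg, neg_sq] at h
    exact h.symm
  rw [tau1_eq, tau1_eq, hneg, ← mul_add, ← intervalIntegral.integral_add
    (intervalIntegrable_kern_mul μ hμ f hf x t) (intervalIntegrable_kern_neg_mul μ hμ f hf x t)]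
  simp only [add_mul]

/-- The symmetrized integrand equals `f(B)(1 + r) + f(-B)(1 - r)` with `r = (t + xθ)/B`,
where `|r| ≤ 1`. -/
lemma kern_add_kern_neg_nonneg (f : ℝ → ℝ) (hf0 : ∀ s, 0 ≤ f s) (x t : ℝ) {θ : ℝ}
    (hθ : θ ∈ Set.Icc (-1 : ℝ) 1) : 0 ≤ kern f x t θ + kern f (-x) t (-θ) := by
  have hB0 := Bq_nonneg x t θ
  have hBsq := Bq_sq x t hθ
  unfold kern
  rw [Bq_neg_neg]
  generalize Bq x t θ = b at *
  have h1 := hf0 b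
  have h2 := hf0 (-b)
  unfold evenPart oddPart
  split_ifs with hb
  · nlinarith
  · have hbpos : 0 < b := lt_of_le_of_ne hB0 (Ne.symm hb)
    have hr : |(t + x * θ) / b| ≤ 1 := by
      rw [abs_div, abs_of_pos hbpos, div_le_iff₀ hbpos, one_mul]
      refine abs_le_of_sq_le_sq ?_ hB0
      have h0 : 0 ≤ 1 - θ ^ 2 := by nlinarith [hθ.1, hθ.2]
      nlinarith [mul_nonneg (sq_nonneg x) h0]
    rw [abs_le] at hr
    have key : ((f b + f (-b)) / 2 + (f b - f (-b)) / 2 * (x + t) / b) * (1 + θ) +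
        ((f b + f (-b)) / 2 + (f b - f (-b)) / 2 * (-x + t) / b) * (1 + -θ) =
        f b * (1 + (t + x * θ) / b) + f (-b) * (1 - (t + x * θ) / b) := by
      field_simp
      ring
    rw [key]
    exact add_nonneg (mul_nonneg h1 (by linarith)) (mul_nonneg h2 (by linarith))

/-- **Comparison of parameters.** For `λ > 0` and continuous `f ≥ 0`,
`(τ_x^{λ+1} f)(t) + (τ_{−x}^{λ+1} f)(t) ≤ ((2λ+1)/(2λ))[(τ_x^{λ} f)(t) + (τ_{−x}^{λ} f)(t)]`. -/
theorem tau1_succ_le_of_nonneg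
    (lam : ℝ) (hlam : 0 < lam) (f : ℝ → ℝ) (hf : Continuous f) (hf0 : ∀ s, 0 ≤ f s)
    (x t : ℝ) :
    tau1 (lam + 1) f x t + tau1 (lam + 1) f (-x) t ≤
      ((2 * lam + 1) / (2 * lam)) * (tau1 lam f x t + tau1 lam f (-x) t) := by
  rw [tau1_add_tau1_neg (lam + 1) (by linarith) f hf, tau1_add_tau1_neg lam hlam f hf,
    cMu_add_one lam hlam, mul_assoc]
  have hc : 0 ≤ cMu lam := by
    unfold cMu
    have := Real.Gamma_pos_of_pos hlam
    have := Real.Gamma_pos_of_pos (show 0 < lam + 1 / 2 by linarith)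
    have := Real.Gamma_pos_of_pos (show (0 : ℝ) < 1 / 2 by norm_num)
    positivity
  refine mul_le_mul_of_nonneg_left (mul_le_mul_of_nonneg_left ?_ hc) (by positivity)
  refine intervalIntegral.integral_mono_on (by norm_num)
    (intervalIntegrable_sym_mul (lam + 1) (by linarith) f hf x t)
    (intervalIntegrable_sym_mul lam hlam f hf x t) fun θ hθ => ?_
  refine mul_le_mul_of_nonneg_left ?_ (kern_add_kern_neg_nonneg f hf0 x t hθ)
  have h0 : 0 ≤ 1 - θ ^ 2 := by nlinarith [hθ.1, hθ.2]
  rcases h0.eq_or_lt with h | h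
  · rw [← h, add_sub_cancel_right, Real.zero_rpow hlam.ne']
    exact Real.rpow_nonneg le_rfl _
  · exact Real.rpow_le_rpow_of_exponent_ge h (by nlinarith [sq_nonneg θ]) (by linarith)

end
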